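/- When all users are truthful, the revenue-maximizing price lies in the set of submitted bids (valuations): there exists a user i* ∈ U such that for every real price p ≥ 0, Rev(p) ≤ Rev(u_{i*}), where Rev(p) = p·min(Σ_{i∈U : u_i ≥ p} r_i, v). -/

import Mathlib

/-!
Rounding a price `p` up to the lowest bid that is still at least `p` keeps the set of served
users unchanged and does not lower the price, so it does not lower the revenue; if no bid reaches
`p`, the revenue at `p` is zero. Hence a bid that maximizes the revenue among the finitely many
bids maximizes it among all prices.
-/

open Classical in
/-- When all users are truthful, the revenue-maximizing price lies in the set of
submitted bids (valuations): there exists a user i* ∈ U such that for every price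
p ≥ 0, Rev(p) ≤ Rev(u_{i*}), where Rev(p) = p·min(Σ_{i ∈ U : u_i ≥ p} r_i, v). -/
theorem optimal_price_in_bids {α : Type*} (U : Finset α) (hU : U.Nonempty)
    (u : α → ℝ) (hu : ∀ i ∈ U, 0 ≤ u i) (r : α → ℕ) (v : ℕ) :
    ∃ i ∈ U, ∀ p : ℝ, 0 ≤ p →
      p * min (∑ j ∈ U.filter (fun j => p ≤ u j), (r j : ℝ)) (v : ℝ) ≤
      u i * min (∑ j ∈ U.filter (fun j => u i ≤ u j), (r j : ℝ)) (v : ℝ) := by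
  have hnonneg : ∀ q : ℝ,
      0 ≤ min (∑ j ∈ U.filter (fun j => q ≤ u j), (r j : ℝ)) (v : ℝ) := fun q =>
    le_min (Finset.sum_nonneg fun j _ => Nat.cast_nonneg _) (Nat.cast_nonneg _)
  obtain ⟨i, hi, hmax⟩ := Finset.exists_max_image U
    (fun i => u i * min (∑ j ∈ U.filter (fun j => u i ≤ u j), (r j : ℝ)) (v : ℝ)) hU
  refine ⟨i, hi, fun p hp => ?_⟩
  rcases (U.filter (fun j => p ≤ u j)).eq_empty_or_nonempty with he | hne
  · rw [he, Finset.sum_empty, min_eq_left (Nat.cast_nonneg v), mul_zero]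
    exact mul_nonneg (hu i hi) (hnonneg _)
  · -- `k` is a lowest bidder among those who accept the price `p`
    obtain ⟨k, hk, hmin⟩ := Finset.exists_min_image _ u hne
    obtain ⟨hkU, hpk⟩ := Finset.mem_filter.mp hk
    have hfilter : U.filter (fun j => p ≤ u j) = U.filter (fun j => u k ≤ u j) := by
      ext j
      simp only [Finset.mem_filter]
      exact ⟨fun h => ⟨h.1, hmin j (Finset.mem_filter.mpr h)⟩, fun h => ⟨h.1, hpk.trans h.2⟩⟩
    rw [hfilter]
    exact (mul_le_mul_of_nonneg_right hpk (hnonneg _)).trans (hmax k hkU)
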